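/- Asymptotic Markov chain at the first hop: under the K-hop change of measure with liminf_{n→∞} Δ_k > 0, and with U₁ := (M̃₁, Ỹ₀^{T−1},…,Ỹ_k^{T−1}, T) and Ỹ_ℓ := Ỹ_{ℓ,T}, one has lim_{n→∞} I(Ỹ₁,…,Ỹ_k; U₁ | Ỹ₀) = 0; in particular lim_{n→∞} I(U₁; Ỹ₁ | Ỹ₀) = 0. -/

import Mathlib

open Filter

noncomputable section

/-- `p` is a probability mass function on the finite alphabet `α`. -/
def IsPMF {α : Type*} [Fintype α] (p : α → ℝ) : Prop :=
  (∀ a, 0 ≤ p a) ∧ ∑ a, p a = 1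

open Classical in
/-- Probability that the random variable `X` takes the value `a`, under the pmf `p`. -/
def probEq {Ω α : Type*} [Fintype Ω] (p : Ω → ℝ) (X : Ω → α) (a : α) : ℝ :=
  ∑ ω, if X ω = a then p ω else 0

/-- Shannon entropy (base 2) of the random variable `X` under the pmf `p`. -/
def entOf {Ω α : Type*} [Fintype Ω] (p : Ω → ℝ) (X : Ω → α) : ℝ :=
  -∑ ω, p ω * Real.logb 2 (probEq p X (X ω))

/-- Conditional Shannon entropy `H(X | Y)` under the pmf `p`. -/
def condEntOf {Ω α β : Type*} [Fintype Ω] (p : Ω → ℝ) (X : Ω → α) (Y : Ω → β) : ℝ :=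
  entOf p (fun ω => (X ω, Y ω)) - entOf p Y

/-- Mutual information `I(X ; Y)` under the pmf `p`. -/
def miOf {Ω α β : Type*} [Fintype Ω] (p : Ω → ℝ) (X : Ω → α) (Y : Ω → β) : ℝ :=
  entOf p X + entOf p Y - entOf p (fun ω => (X ω, Y ω))

/-- Conditional mutual information `I(X ; Y | Z)` under the pmf `p`. -/
def condMIOf {Ω α β γ : Type*} [Fintype Ω] (p : Ω → ℝ) (X : Ω → α) (Y : Ω → β)
    (Z : Ω → γ) : ℝ :=
  condEntOf p X Z + condEntOf p Y Z - condEntOf p (fun ω => (X ω, Y ω)) Z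

open Classical in
/-- Probability of the set `S` under the pmf `p`. -/
def probSet {Ω : Type*} [Fintype Ω] (p : Ω → ℝ) (S : Set Ω) : ℝ :=
  ∑ ω, if ω ∈ S then p ω else 0

open Classical in
/-- Number of occurrences of the symbol `a` in the sequence `w`. -/
def Ncount {W : Type*} {n : ℕ} (w : Fin n → W) (a : W) : ℕ :=
  (Finset.univ.filter (fun i => w i = a)).card

/-- The strongly typical set `T_μ⁽ⁿ⁾(P)`. -/
def typicalSet {W : Type*} [Fintype W] (P : W → ℝ) (μ : ℝ) (n : ℕ) : Set (Fin n → W) :=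
  {w | ∀ a, |((Ncount w a : ℝ)) / n - P a| ≤ μ ∧ (P a = 0 → Ncount w a = 0)}

/-- The typicality parameter `μ_n = n^{-1/3}`. -/
def μseq (n : ℕ) : ℝ := (n : ℝ) ^ (-(1/3 : ℝ))

section KHop

variable (k : ℕ) (Y : ℕ → Type) [∀ i, Fintype (Y i)] [∀ i, Nonempty (Y i)]

/-- The index `j` viewed as an element of `Fin (k+1)`. -/
def idxLo (j : Fin k) : Fin (k + 1) := ⟨(j : ℕ), Nat.lt_succ_of_lt j.isLt⟩

/-- The index `j+1` viewed as an element of `Fin (k+1)`. -/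
def idxHi (j : Fin k) : Fin (k + 1) := ⟨(j : ℕ) + 1, Nat.succ_lt_succ j.isLt⟩

variable (P : (∀ i : Fin (k + 1), Y i) → ℝ)

/-- The i.i.d. law of the source tuple `(Y₀ⁿ,…,Y_kⁿ)` under hypothesis `H = 0`. -/
def iidK (n : ℕ) (ys : ∀ i : Fin (k + 1), Fin n → Y i) : ℝ :=
  ∏ t : Fin n, P (fun i => ys i t)

open Classical in
/-- The marginal pmf of `Y_i` under `P`. -/
def margK (i : Fin (k + 1)) (c : Y i) : ℝ :=
  ∑ y : ∀ i : Fin (k + 1), Y i, if y i = c then P y else 0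

/-- The product of the marginals `P_{Y₀}·P_{Y₁}⋯P_{Y_k}`. -/
def prodMargK (y : ∀ i : Fin (k + 1), Y i) : ℝ := ∏ i, margK k Y P i (y i)

/-- The i.i.d. law of the source tuple under hypothesis `H = 1` (product of marginals). -/
def iidQK (n : ℕ) (ys : ∀ i : Fin (k + 1), Fin n → Y i) : ℝ :=
  ∏ t : Fin n, prodMargK k Y P (fun i => ys i t)

open Classical in
/-- The pairwise marginal `P_{Y_j Y_{j+1}}` of `P`. -/
def pairMargK (j : Fin k) (a : Y (j : ℕ)) (b : Y ((j : ℕ) + 1)) : ℝ :=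
  ∑ y : ∀ i : Fin (k + 1), Y i, if y (idxLo k j) = a ∧ y (idxHi k j) = b then P y else 0

open Classical in
/-- `P` forms the Markov chain `Y₀ → Y₁ → ⋯ → Y_k`. -/
def IsMarkovChainK : Prop :=
  ∀ y : ∀ i : Fin (k + 1), Y i,
    P y * ∏ i ∈ Finset.univ.filter (fun i : Fin (k + 1) => 0 < (i : ℕ) ∧ (i : ℕ) < k),
        margK k Y P i (y i)
      = ∏ j : Fin k, pairMargK k Y P j (y (idxLo k j)) (y (idxHi k j))

/-- Extension of a source tuple to all natural indices (junk beyond `k`). -/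
def extendTup (n : ℕ) (ys : ∀ i : Fin (k + 1), Fin n → Y i) (ℓ : ℕ) : Fin n → Y ℓ :=
  if h : ℓ < k + 1 then ys ⟨ℓ, h⟩ else fun _ => Classical.arbitrary (Y ℓ)

/-- The messages computed recursively from the encoders:
`msgRec φ ys' ℓ` is the message `M_{ℓ+1}`. -/
def msgRec (n : ℕ) (φ : ∀ ℓ : ℕ, (Fin n → Y ℓ) → ℕ → ℕ)
    (ys' : ∀ ℓ : ℕ, Fin n → Y ℓ) : ℕ → ℕ
  | 0 => φ 0 (ys' 0) 0
  | (ℓ + 1) => φ (ℓ + 1) (ys' (ℓ + 1)) (msgRec n φ ys' ℓ)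

/-- A source tuple viewed as one sequence over the product alphabet. -/
def tupleSeq {n : ℕ} (ys : ∀ i : Fin (k + 1), Fin n → Y i) :
    Fin n → (∀ i : Fin (k + 1), Y i) :=
  fun t i => ys i t

/-- The acceptance region `A_k` of the decision center `R_k`: the tuples on which the
guess is `Ĥ_k = 0` (decision `false`). -/
def acceptSet (n : ℕ) (φ : ∀ ℓ : ℕ, (Fin n → Y ℓ) → ℕ → ℕ)
    (g : (Fin n → Y k) → ℕ → Bool) : Set (∀ i : Fin (k + 1), Fin n → Y i) :=
  {ys | g (extendTup k Y n ys k) (msgRec Y n φ (extendTup k Y n ys) (k - 1)) = false}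

/-- The set `D_k`: the acceptance region intersected with the strongly typical set. -/
def DsetCM (n : ℕ) (φ : ∀ ℓ : ℕ, (Fin n → Y ℓ) → ℕ → ℕ)
    (g : (Fin n → Y k) → ℕ → Bool) : Set (∀ i : Fin (k + 1), Fin n → Y i) :=
  acceptSet k Y n φ g ∩ {ys | tupleSeq k Y ys ∈ typicalSet P (μseq n) n}

/-- `Δ_k = Pr[(Y₀ⁿ,…,Y_kⁿ) ∈ D_k]` under `H = 0`. -/
def DeltaCM (n : ℕ) (φ : ∀ ℓ : ℕ, (Fin n → Y ℓ) → ℕ → ℕ)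
    (g : (Fin n → Y k) → ℕ → Bool) : ℝ :=
  probSet (iidK k Y P n) (DsetCM k Y P n φ g)

open Classical in
/-- The change-of-measure pmf of `(Ỹ₀ⁿ,…,Ỹ_kⁿ)`: the `H = 0` law conditioned on `D_k`. -/
def ptildeCM (n : ℕ) (φ : ∀ ℓ : ℕ, (Fin n → Y ℓ) → ℕ → ℕ)
    (g : (Fin n → Y k) → ℕ → Bool) (ys : ∀ i : Fin (k + 1), Fin n → Y i) : ℝ :=
  if ys ∈ DsetCM k Y P n φ g then iidK k Y P n ys / DeltaCM k Y P n φ g else 0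

/-- The pmf of `((Ỹ₀ⁿ,…,Ỹ_kⁿ), T)` with `T` uniform on `{1,…,n}` independent of the rest. -/
def pfullCM (n : ℕ) (φ : ∀ ℓ : ℕ, (Fin n → Y ℓ) → ℕ → ℕ)
    (g : (Fin n → Y k) → ℕ → Bool)
    (ω : (∀ i : Fin (k + 1), Fin n → Y i) × Fin n) : ℝ :=
  ptildeCM k Y P n φ g ω.1 / n

/-- The random variable `M̃_{j+1}` (the message of hop `j+1` applied to the tilde sources). -/
def MtilRV (n : ℕ) (φ : ∀ ℓ : ℕ, (Fin n → Y ℓ) → ℕ → ℕ) (j : ℕ)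
    (ω : (∀ i : Fin (k + 1), Fin n → Y i) × Fin n) : ℕ :=
  msgRec Y n φ (extendTup k Y n ω.1) j

open Classical in
/-- The prefixes `(Ỹ₀^{T−1},…,Ỹ_k^{T−1})` as a random variable. -/
def prefixAll (n : ℕ) (ω : (∀ i : Fin (k + 1), Fin n → Y i) × Fin n) :
    ∀ i : Fin (k + 1), Fin n → Option (Y i) :=
  fun i t => if (t : ℕ) < (ω.2 : ℕ) then some (ω.1 i t) else none

/-- The auxiliary random variable `U_{j+1} := (M̃_{j+1}, Ỹ₀^{T−1},…,Ỹ_k^{T−1}, T)`. -/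
def UvarCM (n : ℕ) (φ : ∀ ℓ : ℕ, (Fin n → Y ℓ) → ℕ → ℕ) (j : ℕ)
    (ω : (∀ i : Fin (k + 1), Fin n → Y i) × Fin n) :
    ℕ × (∀ i : Fin (k + 1), Fin n → Option (Y i)) × Fin n :=
  (MtilRV k Y n φ j ω, prefixAll k Y n ω, ω.2)

/-- The type-I error probability `α_{k,n} = Pr[Ĥ_k = 1 | H = 0]`. -/
def alphaCM (n : ℕ) (φ : ∀ ℓ : ℕ, (Fin n → Y ℓ) → ℕ → ℕ)
    (g : (Fin n → Y k) → ℕ → Bool) : ℝ :=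
  probSet (iidK k Y P n) ((acceptSet k Y n φ g)ᶜ)

/-- The type-II error probability `β_{k,n} = Pr[Ĥ_k = 0 | H = 1]`. -/
def betaCM (n : ℕ) (φ : ∀ ℓ : ℕ, (Fin n → Y ℓ) → ℕ → ℕ)
    (g : (Fin n → Y k) → ℕ → Bool) : ℝ :=
  probSet (iidQK k Y P n) (acceptSet k Y n φ g)

end KHop

/-!
Write `X = Y₀` and `Z = (Y₁, …, Y_k)`, let `Q` be the conditional law of `Z` given `X` under `P`,
and take all expectations and entropies under the changed measure. Three inequalities give
`I(Z_T; U_T | X_T) ≤ log (1 / Δ) / n`, which tends to `0` as soon as `liminf Δ > 0`: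

* `H(Z_T | X_T) ≤ -E[log Q(Z_T | X_T)]`, by the Gibbs inequality;
* `H(Zⁿ | Xⁿ) ≥ -n E[log Q(Z_T | X_T)] - log (1 / Δ)`, because conditioning on an event of
  probability `Δ` multiplies the i.i.d. density by at most `1 / Δ`;
* `n H(Z_T | U_T, X_T) ≥ H(Zⁿ | Xⁿ)`, because `U_T` only depends on `Xⁿ`, `T` and the values of `Z`
  before time `T`.
-/

section FiniteProbability

variable {Ω α β : Type*} [Fintype Ω] {p : Ω → ℝ}

lemma sum_mul_congr_of_pos {f g : Ω → ℝ} (hp : ∀ ω, 0 ≤ p ω)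
    (h : ∀ ω, 0 < p ω → f ω = g ω) : ∑ ω, p ω * f ω = ∑ ω, p ω * g ω :=
  Finset.sum_congr rfl fun ω _ => by
    rcases (hp ω).eq_or_lt with hω | hω
    · rw [← hω, zero_mul, zero_mul]
    · rw [h ω hω]

lemma sum_mul_le_sum_mul_of_pos {f g : Ω → ℝ} (hp : ∀ ω, 0 ≤ p ω)
    (h : ∀ ω, 0 < p ω → f ω ≤ g ω) : ∑ ω, p ω * f ω ≤ ∑ ω, p ω * g ω :=
  Finset.sum_le_sum fun ω _ => by
    rcases (hp ω).eq_or_lt with hω | hω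
    · rw [← hω, zero_mul, zero_mul]
    · exact mul_le_mul_of_nonneg_left (h ω hω) hω.le

lemma probEq_nonneg (hp : ∀ ω, 0 ≤ p ω) (X : Ω → α) (a : α) : 0 ≤ probEq p X a :=
  Finset.sum_nonneg fun ω _ => by split_ifs <;> [exact hp ω; exact le_rfl]

lemma le_probEq_apply (hp : ∀ ω, 0 ≤ p ω) (X : Ω → α) (ω : Ω) : p ω ≤ probEq p X (X ω) := by
  classical
  simpa [probEq] using Finset.single_le_sum (f := fun ω' => if X ω' = X ω then p ω' else 0)
    (fun ω' _ => by split_ifs <;> [exact hp ω'; exact le_rfl]) (Finset.mem_univ ω)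

lemma probEq_apply_pos (hp : ∀ ω, 0 ≤ p ω) (X : Ω → α) {ω : Ω} (hω : 0 < p ω) :
    0 < probEq p X (X ω) :=
  hω.trans_le (le_probEq_apply hp X ω)

lemma exists_pos_of_probEq_pos {X : Ω → α} {a : α} (ha : 0 < probEq p X a) :
    ∃ ω, X ω = a ∧ 0 < p ω := by
  classical
  obtain ⟨ω, -, hω⟩ := Finset.exists_lt_of_sum_lt (Finset.sum_const_zero.trans_lt ha)
  split_ifs at hω with hX
  · exact ⟨ω, hX, hω⟩
  · exact absurd hω (lt_irrefl _)

lemma probEq_apply_of_injective {X : Ω → α} (hX : Function.Injective X) (ω : Ω) :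
    probEq p X (X ω) = p ω := by
  classical
  simp only [probEq, hX.eq_iff, Finset.sum_ite_eq', Finset.mem_univ, if_true]

lemma sum_mul_comp_eq_sum_probEq_mul (p : Ω → ℝ) {X : Ω → α} {S : Finset α}
    (hS : ∀ ω, X ω ∈ S) (f : α → ℝ) :
    ∑ ω, p ω * f (X ω) = ∑ a ∈ S, probEq p X a * f a := by
  classical
  simp only [probEq, Finset.sum_mul, ite_mul, zero_mul]
  rw [Finset.sum_comm]
  exact Finset.sum_congr rfl fun ω _ => by rw [Finset.sum_ite_eq, if_pos (hS ω)]

lemma sum_probEq (p : Ω → ℝ) {X : Ω → α} {S : Finset α} (hS : ∀ ω, X ω ∈ S) :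
    ∑ a ∈ S, probEq p X a = ∑ ω, p ω := by
  simpa using (sum_mul_comp_eq_sum_probEq_mul p hS fun _ => 1).symm

lemma sum_probEq_prodMk (p : Ω → ℝ) {X : Ω → α} {S : Finset α} (hS : ∀ ω, X ω ∈ S)
    (Y : Ω → β) (b : β) :
    ∑ a ∈ S, probEq p (fun ω => (X ω, Y ω)) (a, b) = probEq p Y b := by
  classical
  simp only [probEq, Prod.mk.injEq, ite_and]
  rw [Finset.sum_comm]
  exact Finset.sum_congr rfl fun ω _ => by rw [Finset.sum_ite_eq, if_pos (hS ω)]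

/-- The conditional probability `Pr[X = x | Y = y]` under `p`, with the arguments ordered as those
of a kernel from the values of `Y` to the values of `X`; it is `0` when `Pr[Y = y] = 0`. -/
def condProbEq (p : Ω → ℝ) (X : Ω → α) (Y : Ω → β) (y : β) (x : α) : ℝ :=
  probEq p (fun ω => (X ω, Y ω)) (x, y) / probEq p Y y

lemma condProbEq_nonneg (hp : ∀ ω, 0 ≤ p ω) (X : Ω → α) (Y : Ω → β) (y : β) (x : α) :
    0 ≤ condProbEq p X Y y x :=
  div_nonneg (probEq_nonneg hp _ _) (probEq_nonneg hp _ _)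

lemma condProbEq_apply_pos (hp : ∀ ω, 0 ≤ p ω) (X : Ω → α) (Y : Ω → β) {ω : Ω} (hω : 0 < p ω) :
    0 < condProbEq p X Y (Y ω) (X ω) :=
  div_pos (probEq_apply_pos hp (fun ω => (X ω, Y ω)) hω) (probEq_apply_pos hp Y hω)

lemma sum_condProbEq_le_one (p : Ω → ℝ) {X : Ω → α} {S : Finset α} (hS : ∀ ω, X ω ∈ S)
    (Y : Ω → β) (y : β) : ∑ x ∈ S, condProbEq p X Y y x ≤ 1 := by
  simp only [condProbEq]
  rw [← Finset.sum_div, sum_probEq_prodMk p hS]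
  exact div_self_le_one _

lemma probEq_mul_condProbEq_of_injective (hp : ∀ ω, 0 ≤ p ω) {X : Ω → α} {Y : Ω → β}
    (hXY : Function.Injective fun ω => (X ω, Y ω)) (ω : Ω) :
    probEq p Y (Y ω) * condProbEq p X Y (Y ω) (X ω) = p ω := by
  rw [condProbEq, probEq_apply_of_injective hXY ω]
  refine mul_div_cancel_of_imp' fun hY => le_antisymm ?_ (hp ω)
  exact hY ▸ le_probEq_apply hp Y ω

end FiniteProbability

section Entropy

lemma sum_mul_logb_le_sum_mul_logb_self {ι : Type*} {b : ℝ} (hb : 1 < b) (S : Finset ι)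
    {p q : ι → ℝ} (hp : ∀ i, 0 ≤ p i) (hq : ∀ i, 0 ≤ q i) (hpq : ∀ i, 0 < p i → 0 < q i)
    (hsum : ∑ i ∈ S, q i ≤ ∑ i ∈ S, p i) :
    ∑ i ∈ S, p i * Real.logb b (q i) ≤ ∑ i ∈ S, p i * Real.logb b (p i) := by
  have hterm : ∀ i ∈ S, p i * Real.log (q i) - p i * Real.log (p i) ≤ q i - p i := by
    intro i _
    rcases (hp i).eq_or_lt with hi | hi
    · simpa [← hi] using hq i
    · calc p i * Real.log (q i) - p i * Real.log (p i)
          = p i * Real.log (q i / p i) := by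
            rw [Real.log_div (hpq i hi).ne' hi.ne', mul_sub]
        _ ≤ p i * (q i / p i - 1) :=
            mul_le_mul_of_nonneg_left (Real.log_le_sub_one_of_pos (div_pos (hpq i hi) hi)) hi.le
        _ = q i - p i := by field_simp
  have hlog : ∑ i ∈ S, p i * Real.log (q i) ≤ ∑ i ∈ S, p i * Real.log (p i) := by
    have hle := Finset.sum_le_sum hterm
    rw [Finset.sum_sub_distrib, Finset.sum_sub_distrib] at hle
    linarith
  simp only [Real.logb, ← mul_div_assoc, ← Finset.sum_div]
  exact div_le_div_of_nonneg_right hlog (Real.log_pos hb).le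

variable {Ω α β γ δ : Type*} [Fintype Ω] {p : Ω → ℝ}

lemma entOf_le_crossEntropy (hp : ∀ ω, 0 ≤ p ω) {X : Ω → α} {S : Finset α} (hS : ∀ ω, X ω ∈ S)
    {q : α → ℝ} (hq : ∀ a, 0 ≤ q a) (hsum : ∑ a ∈ S, q a ≤ ∑ ω, p ω)
    (hpos : ∀ ω, 0 < p ω → 0 < q (X ω)) :
    entOf p X ≤ -∑ ω, p ω * Real.logb 2 (q (X ω)) := by
  refine neg_le_neg ?_
  rw [sum_mul_comp_eq_sum_probEq_mul p hS fun a => Real.logb 2 (q a),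
    sum_mul_comp_eq_sum_probEq_mul p hS fun a => Real.logb 2 (probEq p X a)]
  refine sum_mul_logb_le_sum_mul_logb_self one_lt_two S (probEq_nonneg hp X) hq (fun a ha => ?_)
    (hsum.trans_eq (sum_probEq p hS).symm)
  obtain ⟨ω, rfl, hω⟩ := exists_pos_of_probEq_pos ha
  exact hpos ω hω

lemma condEntOf_le_crossEntropy (hp : ∀ ω, 0 ≤ p ω) {X : Ω → α} {S : Finset α}
    (hS : ∀ ω, X ω ∈ S) (Y : Ω → β) {q : β → α → ℝ} (hq : ∀ y x, 0 ≤ q y x)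
    (hsum : ∀ y, ∑ x ∈ S, q y x ≤ 1) (hpos : ∀ ω, 0 < p ω → 0 < q (Y ω) (X ω)) :
    condEntOf p X Y ≤ -∑ ω, p ω * Real.logb 2 (q (Y ω) (X ω)) := by
  classical
  have hY : ∀ ω, Y ω ∈ Finset.univ.image Y := fun ω =>
    Finset.mem_image_of_mem Y (Finset.mem_univ ω)
  have hmass : ∑ a ∈ S ×ˢ Finset.univ.image Y, probEq p Y a.2 * q a.2 a.1 ≤ ∑ ω, p ω := by
    rw [Finset.sum_product_right, ← sum_probEq p hY]
    refine Finset.sum_le_sum fun y _ => ?_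
    simp only [← Finset.mul_sum]
    exact mul_le_of_le_one_right (probEq_nonneg hp Y y) (hsum y)
  have hjoint : entOf p (fun ω => (X ω, Y ω)) ≤
      -∑ ω, p ω * Real.logb 2 (probEq p Y (Y ω) * q (Y ω) (X ω)) :=
    entOf_le_crossEntropy hp (q := fun a => probEq p Y a.2 * q a.2 a.1)
      (fun ω => Finset.mk_mem_product (hS ω) (hY ω))
      (fun a => mul_nonneg (probEq_nonneg hp Y a.2) (hq a.2 a.1)) hmass
      fun ω hω => mul_pos (probEq_apply_pos hp Y hω) (hpos ω hω)
  have hsplit : ∑ ω, p ω * Real.logb 2 (probEq p Y (Y ω) * q (Y ω) (X ω)) =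
      -entOf p Y + ∑ ω, p ω * Real.logb 2 (q (Y ω) (X ω)) := by
    rw [entOf, neg_neg, ← Finset.sum_add_distrib]
    simp only [← mul_add]
    exact sum_mul_congr_of_pos hp fun ω hω =>
      Real.logb_mul (probEq_apply_pos hp Y hω).ne' (hpos ω hω).ne'
  rw [condEntOf]
  linarith

lemma condEntOf_eq_neg_sum_logb_condProbEq (hp : ∀ ω, 0 ≤ p ω) (X : Ω → α) (Y : Ω → β) :
    condEntOf p X Y = -∑ ω, p ω * Real.logb 2 (condProbEq p X Y (Y ω) (X ω)) := by
  have hlog : ∀ ω, 0 < p ω → Real.logb 2 (condProbEq p X Y (Y ω) (X ω)) =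
      Real.logb 2 (probEq p (fun ω => (X ω, Y ω)) (X ω, Y ω)) -
        Real.logb 2 (probEq p Y (Y ω)) := fun ω hω =>
    Real.logb_div (probEq_apply_pos hp (fun ω => (X ω, Y ω)) hω).ne' (probEq_apply_pos hp Y hω).ne'
  rw [sum_mul_congr_of_pos hp hlog]
  simp only [condEntOf, entOf, mul_sub, Finset.sum_sub_distrib]
  ring

lemma entOf_congr (p : Ω → ℝ) {X : Ω → α} {Y : Ω → β}
    (h : ∀ ω ω', X ω = X ω' ↔ Y ω = Y ω') : entOf p X = entOf p Y := by
  classical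
  simp only [entOf, probEq, h]

lemma condEntOf_prodMk_le (hp : ∀ ω, 0 ≤ p ω) (X : Ω → α) (Y : Ω → β) (Z : Ω → γ) :
    condEntOf p X (fun ω => (Y ω, Z ω)) ≤ condEntOf p X Z := by
  classical
  have hS : ∀ ω, X ω ∈ Finset.univ.image X := fun ω =>
    Finset.mem_image_of_mem X (Finset.mem_univ ω)
  rw [condEntOf_eq_neg_sum_logb_condProbEq hp X Z]
  exact condEntOf_le_crossEntropy hp hS (fun ω => (Y ω, Z ω))
    (q := fun yz => condProbEq p X Z yz.2) (fun yz => condProbEq_nonneg hp X Z yz.2)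
    (fun yz => sum_condProbEq_le_one p hS Z yz.2) fun _ => condProbEq_apply_pos hp X Z

lemma condMIOf_comm (p : Ω → ℝ) (X : Ω → α) (Y : Ω → β) (Z : Ω → γ) :
    condMIOf p X Y Z = condMIOf p Y X Z := by
  have hswap : entOf p (fun ω => ((X ω, Y ω), Z ω)) = entOf p (fun ω => ((Y ω, X ω), Z ω)) :=
    entOf_congr p fun ω ω' => by simp only [Prod.mk.injEq]; tauto
  simp only [condMIOf, condEntOf, hswap]
  ring

lemma condMIOf_eq_condEntOf_sub_condEntOf (p : Ω → ℝ) (X : Ω → α) (Y : Ω → β) (Z : Ω → γ) :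
    condMIOf p X Y Z = condEntOf p X Z - condEntOf p X (fun ω => (Y ω, Z ω)) := by
  have hassoc : entOf p (fun ω => ((X ω, Y ω), Z ω)) = entOf p (fun ω => (X ω, (Y ω, Z ω))) :=
    entOf_congr p fun ω ω' => by simp only [Prod.mk.injEq, and_assoc]
  simp only [condMIOf, condEntOf, hassoc]
  ring

lemma condMIOf_nonneg (hp : ∀ ω, 0 ≤ p ω) (X : Ω → α) (Y : Ω → β) (Z : Ω → γ) :
    0 ≤ condMIOf p X Y Z := by
  rw [condMIOf_eq_condEntOf_sub_condEntOf]
  exact sub_nonneg.mpr (condEntOf_prodMk_le hp X Y Z)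

lemma condMIOf_comp_le (hp : ∀ ω, 0 ≤ p ω) (X : Ω → α) (Y : Ω → β) (Z : Ω → γ) (f : α → δ) :
    condMIOf p Y (fun ω => f (X ω)) Z ≤ condMIOf p X Y Z := by
  have hX : condEntOf p Y (fun ω => (X ω, (f (X ω), Z ω))) = condEntOf p Y fun ω => (X ω, Z ω) := by
    unfold condEntOf
    congr 1 <;> exact entOf_congr p fun ω ω' => by simp only [Prod.mk.injEq]; grind
  rw [condMIOf_comm p X, condMIOf_eq_condEntOf_sub_condEntOf, condMIOf_eq_condEntOf_sub_condEntOf,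
    ← hX]
  exact sub_le_sub_left (condEntOf_prodMk_le hp Y X fun ω => (f (X ω), Z ω)) _

end Entropy

section UniformTime

variable {Ω ξ α β υ : Type*} {n : ℕ}

/-- The law of `(ω, T)` where `ω` has law `p` and the time `T` is uniform on `Fin n` and
independent of `ω`. -/
def withUniformTime (p : Ω → ℝ) (n : ℕ) (ω : Ω × Fin n) : ℝ := p ω.1 / n

/-- The process `U` is causal in `Z` given `X`: at time `t` it is a function of `X` and of the
values of `Z` strictly before `t`. -/
def IsCausal (X : Ω → ξ) (Z : Ω → Fin n → β) (U : Ω × Fin n → υ) : Prop :=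
  ∀ ω ω' t, X ω = X ω' → (∀ s < t, Z ω s = Z ω' s) → U (ω, t) = U (ω', t)

lemma IsCausal.exists_dependsOn [Nonempty υ] {X : Ω → ξ} {Z : Ω → Fin n → β} {U : Ω × Fin n → υ}
    (hU : IsCausal X Z U) :
    ∃ v : Fin n → ξ → (Fin n → β) → υ, (∀ t x, DependsOn (v t x) (Set.Iio t)) ∧
      ∀ ω t, U (ω, t) = v t (X ω) (Z ω) := by
  have hfactor : ∀ t, Function.FactorsThrough (fun ω => U (ω, t))
      fun ω => (X ω, (Set.Iio t).domRestrict (Z ω)) := fun t ω ω' h =>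
    hU ω ω' t (congrArg Prod.fst h) fun s hs => congrFun (congrArg Prod.snd h) ⟨s, hs⟩
  choose e he using fun t => (Function.factorsThrough_iff _).mp (hfactor t)
  refine ⟨fun t x z => e t (x, (Set.Iio t).domRestrict z), fun t x z z' h => ?_,
    fun ω t => congrFun (he t) ω⟩
  exact congrArg (fun z => e t (x, z)) (funext fun s => h s.1 s.2)

lemma IsCausal.prodMk_time {X : Ω → Fin n → α} {Z : Ω → Fin n → β} {U : Ω × Fin n → υ}
    (hU : IsCausal X Z U) : IsCausal X Z fun ω => (U ω, X ω.1 ω.2) :=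
  fun ω ω' t hX hZ => Prod.ext (hU ω ω' t hX hZ) (congrFun hX t)

lemma sum_prod_le_one_of_dependsOn_Iio [Fintype β] {K : Fin n → (Fin n → β) → β → ℝ}
    (hK : ∀ t z b, 0 ≤ K t z b) (hdep : ∀ t, DependsOn (K t) (Set.Iio t))
    (hsum : ∀ t z, ∑ b, K t z b ≤ 1) : ∑ z : Fin n → β, ∏ t, K t z (z t) ≤ 1 := by
  induction n with
  | zero => simp
  | succ n ih =>
    rcases isEmpty_or_nonempty (Fin (n + 1) → β) with hempty | ⟨⟨z₀⟩⟩
    · simp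
    have htail : ∀ b, ∑ z : Fin n → β, ∏ t : Fin n, K t.succ (Fin.cons b z) (z t) ≤ 1 := fun b =>
      ih (K := fun t z => K t.succ (Fin.cons b z)) (fun _ _ _ => hK _ _ _)
        (fun t z z' h => hdep t.succ fun s hs => by
          induction s using Fin.cases with
          | zero => rfl
          | succ s => exact h s (Fin.succ_lt_succ_iff.mp hs))
        fun _ _ => hsum _ _
    have hhead : ∀ z, K 0 z = K 0 z₀ := fun z => hdep 0 fun s hs => absurd hs s.not_lt_zero
    calc ∑ z : Fin (n + 1) → β, ∏ t, K t z (z t)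
        = ∑ b, K 0 z₀ b * ∑ z : Fin n → β, ∏ t : Fin n, K t.succ (Fin.cons b z) (z t) := by
          rw [← (Fin.consEquiv fun _ => β).sum_comp, Fintype.sum_prod_type]
          simp [Fin.prod_univ_succ, Fin.consEquiv, hhead, Finset.mul_sum]
      _ ≤ ∑ b, K 0 z₀ b :=
          Finset.sum_le_sum fun b _ => mul_le_of_le_one_right (hK 0 z₀ b) (htail b)
      _ ≤ 1 := hsum 0 z₀

lemma withUniformTime_nonneg {p : Ω → ℝ} (hp : ∀ ω, 0 ≤ p ω) (n : ℕ) (ω : Ω × Fin n) :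
    0 ≤ withUniformTime p n ω :=
  div_nonneg (hp ω.1) n.cast_nonneg

lemma withUniformTime_pos {p : Ω → ℝ} {ω : Ω} (hω : 0 < p ω) (t : Fin n) :
    0 < withUniformTime p n (ω, t) :=
  div_pos hω (Nat.cast_pos.mpr t.pos)

lemma pos_of_withUniformTime_pos {p : Ω → ℝ} {ω : Ω × Fin n} (hω : 0 < withUniformTime p n ω) :
    0 < p ω.1 :=
  (div_pos_iff_of_pos_right (Nat.cast_pos.mpr ω.2.pos)).mp hω

variable [Fintype Ω] {p : Ω → ℝ}

lemma mul_sum_withUniformTime_mul (p : Ω → ℝ) (f : Ω × Fin n → ℝ) :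
    n * ∑ ω, withUniformTime p n ω * f ω = ∑ ω, p ω * ∑ t, f (ω, t) := by
  rw [Fintype.sum_prod_type, Finset.mul_sum]
  refine Finset.sum_congr rfl fun ω _ => ?_
  rw [Finset.mul_sum, Finset.mul_sum]
  refine Finset.sum_congr rfl fun t _ => ?_
  have hn : (n : ℝ) ≠ 0 := Nat.cast_ne_zero.mpr t.pos.ne'
  rw [withUniformTime, ← mul_assoc, mul_div_cancel₀ _ hn]

-- The Gibbs inequality against the causal kernel `∏ t, Pr[Z_T = z t | U_T = u_t(x, z)]` replaces
-- the chain rule for `H(Z | X)` and all comparisons of its summands.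
lemma IsCausal.condEntOf_le_mul_condEntOf [Finite β] [Nonempty υ] {X : Ω → ξ}
    {Z : Ω → Fin n → β} {U : Ω × Fin n → υ} (hU : IsCausal X Z U) (hp : ∀ ω, 0 ≤ p ω) :
    condEntOf p Z X ≤ n * condEntOf (withUniformTime p n) (fun ω => Z ω.1 ω.2) U := by
  have := Fintype.ofFinite β
  obtain ⟨u, hdep, hu⟩ := hU.exists_dependsOn
  have hpT := withUniformTime_nonneg hp n
  set κ := condProbEq (withUniformTime p n) (fun ω => Z ω.1 ω.2) U
  have hκ₀ : ∀ y b, 0 ≤ κ y b := condProbEq_nonneg hpT _ _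
  have hκpos : ∀ ω t, 0 < p ω → 0 < κ (U (ω, t)) (Z ω t) := fun ω t hω =>
    condProbEq_apply_pos hpT (fun ω => Z ω.1 ω.2) U (withUniformTime_pos hω t)
  have hgibbs : condEntOf p Z X ≤
      -∑ ω, p ω * Real.logb 2 (∏ t, κ (u t (X ω) (Z ω)) (Z ω t)) :=
    condEntOf_le_crossEntropy hp (fun ω => Finset.mem_univ (Z ω)) X
      (q := fun x z => ∏ t, κ (u t x z) (z t))
      (fun x z => Finset.prod_nonneg fun t _ => hκ₀ _ _)
      (fun x => sum_prod_le_one_of_dependsOn_Iio (K := fun t z => κ (u t x z)) (fun _ _ => hκ₀ _)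
        (fun t z z' h => congrArg κ (hdep t x h))
        fun t z => sum_condProbEq_le_one _ (fun _ => Finset.mem_univ _) _ _)
      fun ω hω => Finset.prod_pos fun t _ => hu ω t ▸ hκpos ω t hω
  have hlog : ∀ ω, 0 < p ω → Real.logb 2 (∏ t, κ (u t (X ω) (Z ω)) (Z ω t)) =
      ∑ t, Real.logb 2 (κ (U (ω, t)) (Z ω t)) := fun ω hω => by
    simp only [← hu]
    exact Real.logb_prod _ _ fun t _ => (hκpos ω t hω).ne'
  rwa [condEntOf_eq_neg_sum_logb_condProbEq hpT, mul_neg, mul_sum_withUniformTime_mul,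
    ← sum_mul_congr_of_pos hp hlog]

end UniformTime

section SingleLetter

variable {Ω α β υ : Type*} [Fintype Ω] {n : ℕ} {p : Ω → ℝ}
  {X : Ω → Fin n → α} {Z : Ω → Fin n → β} {r : α → ℝ} {Q : α → β → ℝ} {C : ℝ}

lemma pos_of_probEq_le_mul_prod (hp : ∀ ω, 0 ≤ p ω) (hr : ∀ a, 0 ≤ r a) (hQ : ∀ a b, 0 ≤ Q a b)
    (hle : ∀ ω, probEq p (fun ω => (Z ω, X ω)) (Z ω, X ω) ≤
      C * ∏ t, r (X ω t) * Q (X ω t) (Z ω t)) {ω : Ω} (hω : 0 < p ω) (t : Fin n) :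
    0 < r (X ω t) ∧ 0 < Q (X ω t) (Z ω t) := by
  have hprod : ∏ t, r (X ω t) * Q (X ω t) (Z ω t) ≠ 0 := fun hzero => by
    have hpos := (probEq_apply_pos hp (fun ω => (Z ω, X ω)) hω).trans_le (hle ω)
    rw [hzero, mul_zero] at hpos
    exact lt_irrefl _ hpos
  have hfactor := mul_ne_zero_iff.mp (Finset.prod_ne_zero_iff.mp hprod t (Finset.mem_univ t))
  exact ⟨(hr _).lt_of_ne' hfactor.1, (hQ _ _).lt_of_ne' hfactor.2⟩

variable [Fintype α]

lemma entOf_le_neg_sum_logb_prod (hp : IsPMF p) (hr : ∀ a, 0 ≤ r a) (hr1 : ∑ a, r a ≤ 1)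
    (hpos : ∀ ω, 0 < p ω → ∀ t, 0 < r (X ω t)) :
    entOf p X ≤ -∑ ω, p ω * Real.logb 2 (∏ t, r (X ω t)) := by
  refine entOf_le_crossEntropy hp.1 (fun ω => Finset.mem_univ (X ω))
    (q := fun x => ∏ t, r (x t)) (fun x => Finset.prod_nonneg fun t _ => hr (x t)) ?_
    fun ω hω => Finset.prod_pos fun t _ => hpos ω hω t
  rw [← Fintype.sum_pow, hp.2]
  exact pow_le_one₀ (Finset.sum_nonneg fun a _ => hr a) hr1

lemma neg_sum_sub_logb_le_condEntOf (hp : IsPMF p) (hr : ∀ a, 0 ≤ r a) (hr1 : ∑ a, r a ≤ 1)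
    (hQ : ∀ a b, 0 ≤ Q a b) (hC : 0 < C)
    (hle : ∀ ω, probEq p (fun ω => (Z ω, X ω)) (Z ω, X ω) ≤
      C * ∏ t, r (X ω t) * Q (X ω t) (Z ω t)) :
    -(∑ ω, p ω * ∑ t, Real.logb 2 (Q (X ω t) (Z ω t))) - Real.logb 2 C ≤ condEntOf p Z X := by
  have hpos := fun ω hω => pos_of_probEq_le_mul_prod hp.1 hr hQ hle (ω := ω) hω
  have hX := entOf_le_neg_sum_logb_prod hp hr hr1 fun ω hω t => (hpos ω hω t).1
  have hlog : ∀ ω, 0 < p ω → Real.logb 2 (probEq p (fun ω => (Z ω, X ω)) (Z ω, X ω)) ≤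
      Real.logb 2 C + (Real.logb 2 (∏ t, r (X ω t)) +
        ∑ t, Real.logb 2 (Q (X ω t) (Z ω t))) := fun ω hω => by
    have hr₀ : ∏ t, r (X ω t) ≠ 0 := Finset.prod_ne_zero_iff.mpr fun t _ => (hpos ω hω t).1.ne'
    have hQ₀ : ∀ t ∈ Finset.univ, Q (X ω t) (Z ω t) ≠ 0 := fun t _ => (hpos ω hω t).2.ne'
    have hprod₀ := mul_ne_zero hr₀ (Finset.prod_ne_zero_iff.mpr hQ₀)
    rw [← Real.logb_prod _ _ hQ₀, ← Real.logb_mul hr₀ (Finset.prod_ne_zero_iff.mpr hQ₀),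
      ← Real.logb_mul hC.ne' hprod₀, ← Finset.prod_mul_distrib]
    exact Real.logb_le_logb_of_le one_lt_two
      (probEq_apply_pos hp.1 (fun ω => (Z ω, X ω)) hω) (hle ω)
  have hZX := sum_mul_le_sum_mul_of_pos hp.1 hlog
  simp only [mul_add, Finset.sum_add_distrib] at hZX
  rw [← Finset.sum_mul, hp.2, one_mul] at hZX
  rw [condEntOf, entOf]
  linarith

lemma condMIOf_withUniformTime_le [Fintype β] (hn : 0 < n) (hp : IsPMF p) (hr : ∀ a, 0 ≤ r a)
    (hr1 : ∑ a, r a ≤ 1) (hQ : ∀ a b, 0 ≤ Q a b) (hQ1 : ∀ a, ∑ b, Q a b ≤ 1) (hC : 0 < C)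
    (hle : ∀ ω, probEq p (fun ω => (Z ω, X ω)) (Z ω, X ω) ≤
      C * ∏ t, r (X ω t) * Q (X ω t) (Z ω t))
    {U : Ω × Fin n → υ} (hU : IsCausal X Z U) :
    condMIOf (withUniformTime p n) (fun ω => Z ω.1 ω.2) U (fun ω => X ω.1 ω.2) ≤
      Real.logb 2 C / n := by
  have hn₀ : (0 : ℝ) < n := Nat.cast_pos.mpr hn
  have hΩ : Nonempty Ω := by
    by_contra hempty
    rw [not_nonempty_iff] at hempty
    simpa using hp.2
  have hυ : Nonempty (υ × α) :=
    hΩ.map fun ω => (U (ω, ⟨0, hn⟩), X ω ⟨0, hn⟩)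
  have hupper : condEntOf (withUniformTime p n) (fun ω => Z ω.1 ω.2) (fun ω => X ω.1 ω.2) ≤
      -∑ ω, withUniformTime p n ω * Real.logb 2 (Q (X ω.1 ω.2) (Z ω.1 ω.2)) :=
    condEntOf_le_crossEntropy (withUniformTime_nonneg hp.1 n) (fun _ => Finset.mem_univ _) _ hQ hQ1
      fun ω hω => (pos_of_probEq_le_mul_prod hp.1 hr hQ hle (pos_of_withUniformTime_pos hω) ω.2).2
  have hchain := hU.prodMk_time.condEntOf_le_mul_condEntOf hp.1
  have hlower := neg_sum_sub_logb_le_condEntOf hp hr hr1 hQ hC hle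
  rw [← mul_sum_withUniformTime_mul p
    fun ω : Ω × Fin n => Real.logb 2 (Q (X ω.1 ω.2) (Z ω.1 ω.2))] at hlower
  rw [condMIOf_eq_condEntOf_sub_condEntOf, le_div_iff₀ hn₀]
  have hupper' := mul_le_mul_of_nonneg_left hupper hn₀.le
  linarith

end SingleLetter

section ConditionalLaw

variable {Ω : Type*} [Fintype Ω] {p : Ω → ℝ} {S : Set Ω}

open Classical in
/-- The law `p` conditioned on the event `S`; it vanishes identically when `S` has probability
`0`. -/
def condPMF (p : Ω → ℝ) (S : Set Ω) (ω : Ω) : ℝ :=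
  if ω ∈ S then p ω / probSet p S else 0

lemma probSet_nonneg (hp : ∀ ω, 0 ≤ p ω) (S : Set Ω) : 0 ≤ probSet p S :=
  Finset.sum_nonneg fun ω _ => by split_ifs <;> [exact hp ω; exact le_rfl]

lemma condPMF_nonneg (hp : ∀ ω, 0 ≤ p ω) (S : Set Ω) (ω : Ω) : 0 ≤ condPMF p S ω := by
  unfold condPMF
  split_ifs <;> [exact div_nonneg (hp ω) (probSet_nonneg hp S); exact le_rfl]

lemma isPMF_condPMF (hp : ∀ ω, 0 ≤ p ω) (hS : 0 < probSet p S) : IsPMF (condPMF p S) := by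
  classical
  refine ⟨condPMF_nonneg hp S, ?_⟩
  have hdiv : ∀ ω, condPMF p S ω = (if ω ∈ S then p ω else 0) / probSet p S := fun ω => by
    rw [condPMF, ite_div, zero_div]
  simp only [hdiv, ← Finset.sum_div]
  exact div_self hS.ne'

lemma condPMF_le_inv_mul (hp : ∀ ω, 0 ≤ p ω) (S : Set Ω) (ω : Ω) :
    condPMF p S ω ≤ (probSet p S)⁻¹ * p ω := by
  unfold condPMF
  split_ifs
  · exact (div_eq_inv_mul _ _).le
  · exact mul_nonneg (inv_nonneg.mpr (probSet_nonneg hp S)) (hp ω)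

end ConditionalLaw

section KHopBound

variable {k : ℕ} {Y : ℕ → Type} {P : (∀ i : Fin (k + 1), Y i) → ℝ}

/-- The sources `Y₁ⁿ, …, Y_kⁿ` of a tuple, as one sequence of letters `(Y_{1,t}, …, Y_{k,t})`. -/
def laterSources {n : ℕ} (ys : ∀ i : Fin (k + 1), Fin n → Y i) (t : Fin n) (j : Fin k) :
    Y (idxHi k j) :=
  ys (idxHi k j) t

lemma injective_later_first (Z : Fin (k + 1) → Type*) :
    Function.Injective fun y : ∀ i, Z i =>
      ((fun j => y (idxHi k j) : ∀ j, Z (idxHi k j)), y ⟨0, Nat.succ_pos k⟩) :=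
  fun y y' h => funext fun i => by
    induction i using Fin.cases with
    | zero => exact congrArg Prod.snd h
    | succ j => exact congrFun (congrArg Prod.fst h) j

lemma injective_laterSources_first (n : ℕ) :
    Function.Injective fun ys : ∀ i : Fin (k + 1), Fin n → Y i =>
      (laterSources ys, ys ⟨0, Nat.succ_pos k⟩) := by
  intro ys ys' h
  obtain ⟨hlater, hfirst⟩ := Prod.mk.inj h
  refine injective_later_first (fun i : Fin (k + 1) => Fin n → Y i) (Prod.ext ?_ hfirst)
  exact funext fun j => funext fun t => congrFun (congrFun hlater t) j

lemma isCausal_UvarCM_zero [∀ i, Nonempty (Y i)] (n : ℕ) (φ : ∀ ℓ : ℕ, (Fin n → Y ℓ) → ℕ → ℕ) :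
    IsCausal (fun ys : ∀ i : Fin (k + 1), Fin n → Y i => ys ⟨0, Nat.succ_pos k⟩) laterSources
      (UvarCM k Y n φ 0) := by
  intro ys ys' t hfirst hlater
  have hmsg : MtilRV k Y n φ 0 (ys, t) = MtilRV k Y n φ 0 (ys', t) :=
    congrArg (fun x => φ 0 x 0) hfirst
  have hprefix : prefixAll k Y n (ys, t) = prefixAll k Y n (ys', t) := by
    funext i s
    unfold prefixAll
    split_ifs with hs
    · induction i using Fin.cases with
      | zero => exact congrArg some (congrFun hfirst s)
      | succ j => exact congrArg some (congrFun (hlater s hs) j)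
    · rfl
  rw [UvarCM, UvarCM, hmsg, hprefix]

variable [∀ i, Fintype (Y i)]

lemma iidK_nonneg (hP : IsPMF P) (n : ℕ) (ys : ∀ i : Fin (k + 1), Fin n → Y i) :
    0 ≤ iidK k Y P n ys :=
  Finset.prod_nonneg fun _ _ => hP.1 _

lemma probEq_condPMF_iidK_le (hP : IsPMF P) {n : ℕ} (D : Set (∀ i : Fin (k + 1), Fin n → Y i))
    (ys : ∀ i : Fin (k + 1), Fin n → Y i) :
    probEq (condPMF (iidK k Y P n) D) (fun ys => (laterSources ys, ys ⟨0, Nat.succ_pos k⟩))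
        (laterSources ys, ys ⟨0, Nat.succ_pos k⟩) ≤
      (probSet (iidK k Y P n) D)⁻¹ * ∏ t,
        probEq P (fun y => y ⟨0, Nat.succ_pos k⟩) (ys ⟨0, Nat.succ_pos k⟩ t) *
          condProbEq P (fun y j => y (idxHi k j)) (fun y => y ⟨0, Nat.succ_pos k⟩)
            (ys ⟨0, Nat.succ_pos k⟩ t) (laterSources ys t) := by
  have hletter := fun t : Fin n =>
    probEq_mul_condProbEq_of_injective hP.1 (injective_later_first fun i => Y i) fun i => ys i t
  rw [probEq_apply_of_injective (injective_laterSources_first n) ys]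
  exact (condPMF_le_inv_mul (iidK_nonneg hP n) D ys).trans_eq
    (congrArg _ (Finset.prod_congr rfl fun t _ => (hletter t).symm))

lemma condMIOf_condPMF_iidK_le {υ : Type*} (hP : IsPMF P) {n : ℕ} (hn : 0 < n)
    {D : Set (∀ i : Fin (k + 1), Fin n → Y i)} (hD : 0 < probSet (iidK k Y P n) D)
    {U : (∀ i : Fin (k + 1), Fin n → Y i) × Fin n → υ}
    (hU : IsCausal (fun ys => ys ⟨0, Nat.succ_pos k⟩) laterSources U) :
    condMIOf (withUniformTime (condPMF (iidK k Y P n) D) n) (fun ω => laterSources ω.1 ω.2) U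
        (fun ω => ω.1 ⟨0, Nat.succ_pos k⟩ ω.2) ≤
      -Real.logb 2 (probSet (iidK k Y P n) D) / n := by
  rw [← Real.logb_inv]
  exact condMIOf_withUniformTime_le hn (isPMF_condPMF (iidK_nonneg hP n) hD)
    (probEq_nonneg hP.1 _)
    ((sum_probEq P fun _ => Finset.mem_univ _).trans_le hP.2.le)
    (condProbEq_nonneg hP.1 _ _)
    (sum_condProbEq_le_one P (fun _ => Finset.mem_univ _) _) (inv_pos.mpr hD)
    (probEq_condPMF_iidK_le hP D) hU

end KHopBound

theorem asymptotic_markov_first_hop_general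
    (k : ℕ) (Y : ℕ → Type) [∀ i, Fintype (Y i)] (hk : 1 ≤ k)
    (P : (∀ i : Fin (k + 1), Y i) → ℝ) (hP : IsPMF P)
    (D : ∀ n : ℕ, Set (∀ i : Fin (k + 1), Fin n → Y i))
    (hD : 0 < liminf (fun n => probSet (iidK k Y P n) (D n)) atTop)
    {υ : ℕ → Type*} (U : ∀ n : ℕ, (∀ i : Fin (k + 1), Fin n → Y i) × Fin n → υ n)
    (hU : ∀ n, IsCausal (fun ys => ys ⟨0, Nat.succ_pos k⟩) laterSources (U n)) :
    Tendsto (fun n => condMIOf (withUniformTime (condPMF (iidK k Y P n) (D n)) n)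
        (fun ω => laterSources ω.1 ω.2) (U n)
        (fun ω => ω.1 ⟨0, Nat.succ_pos k⟩ ω.2)) atTop (nhds 0) ∧
    Tendsto (fun n => condMIOf (withUniformTime (condPMF (iidK k Y P n) (D n)) n)
        (U n) (fun ω => ω.1 (idxHi k ⟨0, hk⟩) ω.2)
        (fun ω => ω.1 ⟨0, Nat.succ_pos k⟩ ω.2)) atTop (nhds 0) := by
  obtain ⟨δ, hδ, hδD⟩ := exists_between hD
  have hev : ∀ᶠ n in atTop, δ < probSet (iidK k Y P n) (D n) :=
    eventually_lt_of_lt_liminf hδD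
      (isBoundedUnder_of ⟨0, fun n => probSet_nonneg (iidK_nonneg hP n) (D n)⟩)
  have hlim : Tendsto (fun n : ℕ => -Real.logb 2 δ / n) atTop (nhds 0) :=
    tendsto_const_div_atTop_nhds_zero_nat _
  have hp := fun n => withUniformTime_nonneg (condPMF_nonneg (iidK_nonneg hP n) (D n)) n
  have hbound : ∀ᶠ n in atTop, condMIOf (withUniformTime (condPMF (iidK k Y P n) (D n)) n)
      (fun ω => laterSources ω.1 ω.2) (U n) (fun ω => ω.1 ⟨0, Nat.succ_pos k⟩ ω.2) ≤
        -Real.logb 2 δ / n := by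
    filter_upwards [hev, eventually_gt_atTop 0] with n hδn hn
    refine (condMIOf_condPMF_iidK_le hP hn (hδ.trans hδn) (hU n)).trans ?_
    gcongr
    exact one_lt_two
  have hbound' := hbound.mono fun n h =>
    (condMIOf_comp_le (hp n) _ _ _ fun z => z ⟨0, hk⟩).trans h
  exact ⟨tendsto_of_tendsto_of_tendsto_of_le_of_le' tendsto_const_nhds hlim
      (.of_forall fun n => condMIOf_nonneg (hp n) _ _ _) hbound,
    tendsto_of_tendsto_of_tendsto_of_le_of_le' tendsto_const_nhds hlim
      (.of_forall fun n => condMIOf_nonneg (hp n) _ _ _) hbound'⟩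

/-- asymptotic Markov chain at the first hop. Under the `K`-hop change of
measure with `liminf_n Δ_k > 0`, and with `U₁ := (M̃₁, Ỹ₀^{T−1},…,Ỹ_k^{T−1}, T)` and
`Ỹ_ℓ := Ỹ_{ℓ,T}`, one has `lim_n I(Ỹ₁,…,Ỹ_k; U₁ | Ỹ₀) = 0`; in particular
`lim_n I(U₁; Ỹ₁ | Ỹ₀) = 0`. -/
theorem asymptotic_markov_first_hop
    (k : ℕ) (Y : ℕ → Type) [∀ i, Fintype (Y i)] [∀ i, Nonempty (Y i)]
    (hk : 1 ≤ k)
    (P : (∀ i : Fin (k + 1), Y i) → ℝ) (hP : IsPMF P) (hMC : IsMarkovChainK k Y P)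
    (φ : ∀ n : ℕ, ∀ ℓ : ℕ, (Fin n → Y ℓ) → ℕ → ℕ)
    (g : ∀ n : ℕ, (Fin n → Y k) → ℕ → Bool)
    (hΔ : 0 < liminf (fun n => DeltaCM k Y P n (φ n) (g n)) atTop) :
    Tendsto (fun n => condMIOf (pfullCM k Y P n (φ n) (g n))
        (fun ω => (fun j : Fin k => ω.1 (idxHi k j) ω.2))
        (UvarCM k Y n (φ n) 0)
        (fun ω => ω.1 ⟨0, Nat.succ_pos k⟩ ω.2)) atTop (nhds 0) ∧
    Tendsto (fun n => condMIOf (pfullCM k Y P n (φ n) (g n))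
        (UvarCM k Y n (φ n) 0)
        (fun ω => ω.1 (idxHi k ⟨0, hk⟩) ω.2)
        (fun ω => ω.1 ⟨0, Nat.succ_pos k⟩ ω.2)) atTop (nhds 0) := by
  exact asymptotic_markov_first_hop_general k Y hk P hP (fun n => DsetCM k Y P n (φ n) (g n)) hΔ
    (fun n => UvarCM k Y n (φ n) 0) fun n => isCausal_UvarCM_zero n (φ n)
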